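/- arXiv:1401.7032 — 3 statements merged into one kernel-verified Lean document; each statement's English description precedes it below -/
import Mathlib

section
/- If P is an irreducible recurrent stochastic matrix, then for every n ≥ 1 the matrix P^n is recurrent. -/
/-- A stochastic matrix over a countable set `Ω`: nonnegative entries and each row sums to 1. -/
def IsStochastic {Ω : Type*} (P : Ω → Ω → ℝ) : Prop :=
  (∀ i j, 0 ≤ P i j) ∧ ∀ i, HasSum (fun j => P i j) 1

/-- Matrix product over a countable index set. -/
noncomputable def stochMul {Ω : Type*} (P Q : Ω → Ω → ℝ) : Ω → Ω → ℝ :=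
  fun i k => ∑' j, P i j * Q j k

-- Matrix powers `P^n`.
open Classical in
noncomputable def stochPow {Ω : Type*} (P : Ω → Ω → ℝ) : ℕ → Ω → Ω → ℝ
  | 0 => fun i j => if i = j then 1 else 0
  | n + 1 => stochMul (stochPow P n) P

/-- `i` leads to `j`: there is a path (possibly of length 0) from `i` to `j`,
i.e. `(P^n)_{ij} > 0` for some `n ≥ 0`. -/
def LeadsTo {Ω : Type*} (P : Ω → Ω → ℝ) (i j : Ω) : Prop :=
  ∃ n : ℕ, 0 < stochPow P n i j

/-- `i` and `j` communicate: each leads to the other. -/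
def Communicates {Ω : Type*} (P : Ω → Ω → ℝ) (i j : Ω) : Prop :=
  LeadsTo P i j ∧ LeadsTo P j i

/-- `P` is irreducible: every pair of states communicates. -/
def StochIrreducible {Ω : Type*} (P : Ω → Ω → ℝ) : Prop :=
  ∀ i j : Ω, Communicates P i j

/-- A state `i` is recurrent when `∑_n (P^n)_{ii} = ∞`, i.e. the series is not summable
(the entries being nonnegative). -/
def IsRecurrentState {Ω : Type*} (P : Ω → Ω → ℝ) (i : Ω) : Prop :=
  ¬ Summable (fun n : ℕ => stochPow P n i i)

/-- `P` is recurrent when every state is recurrent. -/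
def IsRecurrent {Ω : Type*} (P : Ω → Ω → ℝ) : Prop :=
  ∀ i : Ω, IsRecurrentState P i

/-- `d` is the greatest common divisor of the set `S ⊆ ℕ`. -/
def IsGCDOf (d : ℕ) (S : Set ℕ) : Prop :=
  (∀ n ∈ S, d ∣ n) ∧ ∀ e : ℕ, (∀ n ∈ S, e ∣ n) → e ∣ d

theorem IsStochastic.le_one {Ω : Type*} {P : Ω → Ω → ℝ} (h : IsStochastic P) (i j : Ω) :
    P i j ≤ 1 :=
  le_hasSum (h.2 i) j fun k _ => h.1 i k

theorem summable_aux {Ω : Type*} {A B : Ω → Ω → ℝ} (hA : IsStochastic A) (hB : IsStochastic B)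
    (i : Ω) : Summable (fun p : Ω × Ω => A i p.1 * B p.1 p.2) := by
  refine (summable_prod_of_nonneg (f := fun p : Ω × Ω => A i p.1 * B p.1 p.2)
    (fun p => mul_nonneg (hA.1 i p.1) (hB.1 p.1 p.2))).2 ?_
  refine ⟨fun j => Summable.mul_left (A i j) (hB.2 j).summable, ?_⟩
  simp only [tsum_mul_left, (hB.2 _).tsum_eq, mul_one]
  exact (hA.2 i).summable

theorem summable_row {Ω : Type*} {A B : Ω → Ω → ℝ} (hA : IsStochastic A) (hB : IsStochastic B)
    (i k : Ω) : Summable (fun j => A i j * B j k) :=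
  Summable.of_nonneg_of_le (fun j => mul_nonneg (hA.1 _ _) (hB.1 _ _))
    (fun j => mul_le_of_le_one_right (hA.1 _ _) (hB.le_one _ _)) (hA.2 i).summable

theorem IsStochastic.mul {Ω : Type*} {A B : Ω → Ω → ℝ} (hA : IsStochastic A)
    (hB : IsStochastic B) : IsStochastic (stochMul A B) := by
  refine ⟨fun i j => tsum_nonneg fun k => mul_nonneg (hA.1 _ _) (hB.1 _ _), fun i => ?_⟩
  have hs := summable_aux hA hB i
  have hs' : Summable (fun p : Ω × Ω => A i p.2 * B p.2 p.1) := hs.prod_symm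
  have h1 : Summable (fun k => stochMul A B i k) := hs'.prod
  have h2 : ∑' k, stochMul A B i k = 1 := by
    have h3 := Summable.tsum_comm (f := fun j k => A i j * B j k) hs
    unfold stochMul
    rw [h3]
    simp only [tsum_mul_left, (hB.2 _).tsum_eq, mul_one]
    exact (hA.2 i).tsum_eq
  exact h2 ▸ h1.hasSum

theorem stochMul_assoc' {Ω : Type*} {A B C : Ω → Ω → ℝ} (hA : IsStochastic A)
    (hB : IsStochastic B) (hC : IsStochastic C) :
    stochMul (stochMul A B) C = stochMul A (stochMul B C) := by
  funext i l
  have hs : Summable (fun p : Ω × Ω => A i p.1 * B p.1 p.2 * C p.2 l) :=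
    Summable.of_nonneg_of_le
      (fun p => mul_nonneg (mul_nonneg (hA.1 _ _) (hB.1 _ _)) (hC.1 _ _))
      (fun p => mul_le_of_le_one_right (mul_nonneg (hA.1 _ _) (hB.1 _ _)) (hC.le_one _ _))
      (summable_aux hA hB i)
  have h3 := Summable.tsum_comm (f := fun j k => A i j * B j k * C k l) hs
  simp only [stochMul, ← tsum_mul_right, ← tsum_mul_left]
  rw [h3]
  simp only [mul_assoc]

theorem IsStochastic.pow {Ω : Type*} {P : Ω → Ω → ℝ} (h : IsStochastic P) (n : ℕ) :
    IsStochastic (stochPow P n) := by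
  induction n with
  | zero =>
    classical
    refine ⟨fun i j => ?_, fun i => ?_⟩
    · simp only [stochPow]; split_ifs <;> norm_num
    · simp only [stochPow]
      have h1 := hasSum_single (f := fun j => if i = j then (1 : ℝ) else 0) i
        (fun j hj => if_neg (Ne.symm hj))
      simpa only [if_true] using h1
  | succ n ih => exact ih.mul h

theorem stochMul_one' {Ω : Type*} (A P : Ω → Ω → ℝ) : stochMul A (stochPow P 0) = A := by
  funext i k
  simp only [stochMul, stochPow]
  rw [tsum_eq_single k]
  · simp
  · intro j hj; simp [hj]

theorem stochPow_add' {Ω : Type*} {P : Ω → Ω → ℝ} (h : IsStochastic P) (a b : ℕ) :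
    stochPow P (a + b) = stochMul (stochPow P a) (stochPow P b) := by
  induction b with
  | zero => exact (stochMul_one' _ _).symm
  | succ b ih =>
    change stochMul (stochPow P (a + b)) P = stochMul _ (stochMul (stochPow P b) P)
    rw [ih, stochMul_assoc' (h.pow a) (h.pow b) h]

theorem stochPow_pow {Ω : Type*} {P : Ω → Ω → ℝ} (h : IsStochastic P) (n m : ℕ) :
    stochPow (stochPow P n) m = stochPow P (n * m) := by
  induction m with
  | zero => rfl
  | succ m ih =>
    rw [Nat.mul_succ, stochPow_add' h, ← ih]
    rfl

theorem stochPow_supermul {Ω : Type*} {P : Ω → Ω → ℝ} (h : IsStochastic P) (i : Ω) (a b : ℕ) :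
    stochPow P a i i * stochPow P b i i ≤ stochPow P (a + b) i i := by
  rw [stochPow_add' h]
  exact (summable_row (h.pow a) (h.pow b) i i).le_tsum i
    fun j _ => mul_nonneg ((h.pow a).1 _ _) ((h.pow b).1 _ _)

theorem summable_of_supermul {f : ℕ → ℝ} (h0 : ∀ k, 0 ≤ f k) (hz : 0 < f 0)
    (hm : ∀ a b, f a * f b ≤ f (a + b)) {n : ℕ} (hn : 1 ≤ n)
    (hs : Summable fun m => f (n * m)) : Summable f := by
  have hpos : ∀ k t, 0 < f k → 0 < f (t * k) := by
    intro k t hk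
    induction t with
    | zero => simpa using hz
    | succ t ih =>
      rw [Nat.succ_mul]
      exact (mul_pos ih hk).trans_le (hm _ _)
  have key : ∀ r, Summable fun m => f (n * m + r) := by
    intro r
    by_cases hr : ∃ m0, 0 < f (n * m0 + r)
    · obtain ⟨m0, hm0⟩ := hr
      have hc := hpos _ (n - 1) hm0
      rw [← summable_mul_right_iff hc.ne']
      have hs' : Summable fun m => f (n * (m + (r + (n - 1) * m0))) :=
        (summable_nat_add_iff (f := fun m => f (n * m)) _).2 hs
      refine Summable.of_nonneg_of_le (fun m => mul_nonneg (h0 _) hc.le) (fun m => ?_) hs'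
      refine (hm _ _).trans (le_of_eq ?_)
      congr 1
      obtain ⟨t, rfl⟩ := Nat.exists_eq_add_of_le' hn
      simp only [Nat.add_sub_cancel]
      ring
    · push Not at hr
      have : (fun m => f (n * m + r)) = fun _ => 0 := funext fun m => le_antisymm (hr m) (h0 _)
      rw [this]
      exact summable_zero
  have : NeZero n := ⟨by omega⟩
  rw [← (Nat.divModEquiv n).symm.summable_iff, ← (Equiv.prodComm _ _).summable_iff]
  refine (summable_prod_of_nonneg (fun p => h0 _)).2 ?_
  refine ⟨fun r => ?_, Summable.of_finite⟩
  refine (key r).congr fun m => ?_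
  simp [Nat.divModEquiv, mul_comm]


/-- if `P` is irreducible and recurrent then every power `P^n` (`n ≥ 1`)
is recurrent. -/
theorem pow_of_irreducible_recurrent_is_recurrent {Ω : Type*} [Countable Ω] {P : Ω → Ω → ℝ}
    (hP : IsStochastic P) (hirr : StochIrreducible P) (hrec : IsRecurrent P) :
    ∀ n : ℕ, 1 ≤ n → IsRecurrent (stochPow P n) := by
  intro n hn i hs
  refine hrec i (summable_of_supermul (fun k => (hP.pow k).1 i i) (by simp [stochPow])
    (stochPow_supermul hP i) hn ?_)
  simpa only [stochPow_pow hP] using hs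
end

section
/- Let P be a stochastic matrix over Ω and let C ⊆ Ω with associated projection p = ∑_{i∈C} p_i ∈ ℓ^∞(Ω). Then p is reducing for the subproduct system Arv(P) if and only if every path in the directed graph of P that starts and ends in C stays entirely in C. -/
/-- Membership in the `n`-th fiber of the Arveson–Stinespring subproduct system `Arv(P)` in its
standard presentation: matrices supported on the support of `P^n` with uniformly `ℓ²`-bounded
columns. -/
def InArvFiber {Ω : Type*} (P : Ω → Ω → ℝ) (n : ℕ) (A : Ω → Ω → ℂ) : Prop :=
  (∀ i j, ¬ 0 < stochPow P n i j → A i j = 0) ∧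
  ∃ C : ℝ, ∀ (j : Ω) (s : Finset Ω), ∑ i ∈ s, ‖A i j‖ ^ 2 ≤ C

open Classical in
/-- The subproduct multiplication maps of `Arv(P)` (on simple tensors):
`U_{n,m}(A ⊗ B) = (√(P^{n+m}))^♭ * [(√(P^n) * A) ⬝ (√(P^m) * B)]`, where `*` denotes Schur
(entrywise) product and `♭` the entrywise reciprocal on the support. -/
noncomputable def arvMul {Ω : Type*} (P : Ω → Ω → ℝ) (n m : ℕ) (A B : Ω → Ω → ℂ) :
    Ω → Ω → ℂ :=
  fun i k =>
    if 0 < stochPow P (n + m) i k then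
      (∑' j, ((Real.sqrt (stochPow P n i j) : ℂ) * A i j) *
        ((Real.sqrt (stochPow P m j k) : ℂ) * B j k)) / (Real.sqrt (stochPow P (n + m) i k) : ℂ)
    else 0

open Classical in
/-- The left compression `p A` of a matrix by the projection associated to `C ⊆ Ω`. -/
noncomputable def cutL {Ω : Type*} (C : Set Ω) (A : Ω → Ω → ℂ) : Ω → Ω → ℂ :=
  fun i j => if i ∈ C then A i j else 0

open Classical in
/-- The right compression `A p` of a matrix by the projection associated to `C ⊆ Ω`. -/
noncomputable def cutR {Ω : Type*} (C : Set Ω) (A : Ω → Ω → ℂ) : Ω → Ω → ℂ :=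
  fun i j => if j ∈ C then A i j else 0

/-- The projection `p = ∑_{i ∈ C} p_i` is reducing for `Arv(P)`; for the commutative algebra
`ℓ^∞(Ω)` this is equivalent to `U_{n,m}(p ξ (1-p) ⊗ (1-p) η p) = 0` for all fibers and all
`ξ, η`, which is the formulation used here. -/
def IsReducingSet {Ω : Type*} (P : Ω → Ω → ℝ) (C : Set Ω) : Prop :=
  ∀ (n m : ℕ) (A B : Ω → Ω → ℂ), InArvFiber P n A → InArvFiber P m B →
    arvMul P n m (cutR Cᶜ (cutL C A)) (cutR C (cutL Cᶜ B)) = 0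

lemma stochPow_nonneg_summable {Ω : Type*} {P : Ω → Ω → ℝ} (hP : IsStochastic P) (n : ℕ) :
    (∀ i j, 0 ≤ stochPow P n i j) ∧ ∀ i, Summable (fun j => stochPow P n i j) := by
  classical
  induction n with
  | zero =>
    refine ⟨fun i j => ?_, fun i => ?_⟩
    · simp only [stochPow]; split_ifs <;> norm_num
    · refine summable_of_ne_finset_zero (s := {i}) fun b hb => ?_
      simp only [stochPow]
      rw [if_neg]
      rintro rfl
      simp at hb
  | succ n ih =>
    obtain ⟨h0, hs⟩ := ih
    refine ⟨fun i j => ?_, fun i => ?_⟩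
    · change 0 ≤ ∑' k, stochPow P n i k * P k j
      exact tsum_nonneg fun k => mul_nonneg (h0 i k) (hP.1 k j)
    have key : Summable (fun x : Ω × Ω => stochPow P n i x.1 * P x.1 x.2) := by
      have hnn : 0 ≤ (fun x : Ω × Ω => stochPow P n i x.1 * P x.1 x.2) := by
        intro x
        exact mul_nonneg (h0 i x.1) (hP.1 x.1 x.2)
      rw [summable_prod_of_nonneg hnn]
      have h1 : ∀ j, Summable (fun k => stochPow P n i j * P j k) :=
        fun j => Summable.mul_left (stochPow P n i j) (hP.2 j).summable
      have h2 : ∀ j, ∑' k, stochPow P n i j * P j k = stochPow P n i j := by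
        intro j
        rw [tsum_mul_left, (hP.2 j).tsum_eq, mul_one]
      refine ⟨h1, ?_⟩
      exact (summable_congr h2).2 (hs i)
    have h3 := key.prod_symm.prod
    exact h3

lemma stochPow_succ_pos {Ω : Type*} {P : Ω → Ω → ℝ} (hP : IsStochastic P) (n : ℕ) (i k : Ω) :
    0 < stochPow P (n + 1) i k ↔ ∃ j, 0 < stochPow P n i j ∧ 0 < P j k := by
  obtain ⟨h0, hs⟩ := stochPow_nonneg_summable hP n
  have hnn : ∀ j, 0 ≤ stochPow P n i j * P j k := fun j => mul_nonneg (h0 _ _) (hP.1 _ _)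
  have hsum : Summable (fun j => stochPow P n i j * P j k) := by
    refine Summable.of_nonneg_of_le hnn (fun j => ?_) (hs i)
    exact mul_le_of_le_one_right (h0 _ _) (le_hasSum (hP.2 j) k fun _ _ => hP.1 _ _)
  change 0 < ∑' j, stochPow P n i j * P j k ↔ _
  constructor
  · intro h
    by_contra! hc
    have : ∀ j, stochPow P n i j * P j k = 0 := by
      intro j
      rcases (h0 i j).eq_or_lt with h1 | h1
      · rw [← h1, zero_mul]
      · rw [le_antisymm (hc j h1) (hP.1 _ _), mul_zero]
    simp [this] at h
  · rintro ⟨j, h1, h2⟩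
    exact hsum.tsum_pos hnn j (mul_pos h1 h2)

lemma stochPow_pos_iff {Ω : Type*} {P : Ω → Ω → ℝ} (hP : IsStochastic P) (n : ℕ) (i k : Ω) :
    0 < stochPow P n i k ↔
      ∃ γ : ℕ → Ω, γ 0 = i ∧ γ n = k ∧ ∀ t < n, 0 < P (γ t) (γ (t + 1)) := by
  classical
  induction n generalizing k with
  | zero =>
    simp only [stochPow]
    constructor
    · intro h
      split_ifs at h with hik
      · exact ⟨fun _ => i, rfl, hik, by simp⟩
      · simp at h
    · rintro ⟨γ, rfl, rfl, -⟩
      simp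
  | succ n ih =>
    rw [stochPow_succ_pos hP]
    constructor
    · rintro ⟨j, h1, h2⟩
      obtain ⟨γ, g0, g1, g2⟩ := (ih j).1 h1
      refine ⟨fun t => if t ≤ n then γ t else k, by simpa using g0, by simp, fun t ht => ?_⟩
      rcases (Nat.lt_succ_iff.1 ht).eq_or_lt with rfl | h
      · simpa [g1] using h2
      · simpa [h.le, Nat.succ_le_of_lt h] using g2 t h
    · rintro ⟨γ, g0, g1, g2⟩
      refine ⟨γ n, (ih _).2 ⟨γ, g0, rfl, fun t ht => g2 t (by omega)⟩, ?_⟩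
      rw [← g1]
      exact g2 n (by omega)

open Classical in
lemma inArvFiber_single {Ω : Type*} {P : Ω → Ω → ℝ} (n : ℕ) (a b : Ω)
    (h : 0 < stochPow P n a b) :
    InArvFiber P n (fun i j => if i = a ∧ j = b then 1 else 0) := by
  refine ⟨fun i j hij => ?_, 1, fun j s => ?_⟩
  · beta_reduce
    rw [if_neg]
    rintro ⟨rfl, rfl⟩
    exact hij h
  · calc ∑ i ∈ s, ‖(if i = a ∧ j = b then (1 : ℂ) else 0)‖ ^ 2
        ≤ ∑ i ∈ s, (if i = a then (1 : ℝ) else 0) := by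
          refine Finset.sum_le_sum fun i _ => ?_
          by_cases h1 : i = a <;> by_cases h2 : j = b <;> simp [h1, h2]
      _ ≤ 1 := by
          rw [Finset.sum_ite_eq']
          split_ifs <;> norm_num

/-- `p = ∑_{i ∈ C} p_i` is reducing for `Arv(P)` if and only if every path in the
directed graph of `P` which starts and ends in `C` stays entirely in `C`. -/
theorem isReducingSet_iff_paths {Ω : Type*} [Countable Ω] {P : Ω → Ω → ℝ}
    (hP : IsStochastic P) (C : Set Ω) :
    IsReducingSet P C ↔
      ∀ (ℓ : ℕ) (γ : ℕ → Ω), γ 0 ∈ C → γ ℓ ∈ C →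
        (∀ k < ℓ, 0 < P (γ k) (γ (k + 1))) → ∀ k ≤ ℓ, γ k ∈ C := by
  classical
  constructor
  · intro hR ℓ γ h0 hl hstep k hk
    by_contra hkC
    obtain ⟨m, rfl⟩ := Nat.exists_eq_add_of_le hk
    have p1 : 0 < stochPow P k (γ 0) (γ k) :=
      (stochPow_pos_iff hP _ _ _).2 ⟨γ, rfl, rfl, fun t ht => hstep t (by omega)⟩
    have p2 : 0 < stochPow P m (γ k) (γ (k + m)) :=
      (stochPow_pos_iff hP _ _ _).2 ⟨fun t => γ (k + t), rfl, rfl,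
        fun t ht => hstep (k + t) (by omega)⟩
    have p3 : 0 < stochPow P (k + m) (γ 0) (γ (k + m)) :=
      (stochPow_pos_iff hP _ _ _).2 ⟨γ, rfl, rfl, hstep⟩
    have key := congrFun (congrFun (hR k m _ _ (inArvFiber_single k _ _ p1)
      (inArvFiber_single m _ _ p2)) (γ 0)) (γ (k + m))
    simp only [arvMul, if_pos p3, Pi.zero_apply] at key
    rw [tsum_eq_single (γ k)] at key
    · have e1 := (Real.sqrt_pos.2 p1).ne'
      have e2 := (Real.sqrt_pos.2 p2).ne'
      have e3 := (Real.sqrt_pos.2 p3).ne'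
      simp only [cutR, cutL, Set.mem_compl_iff, hkC, h0, hl, not_false_eq_true, if_true,
        and_self, mul_one, div_eq_zero_iff, mul_eq_zero, Complex.ofReal_eq_zero] at key
      tauto
    · intro j hj
      simp [cutR, cutL, hj]
  · intro h n m A B hA hB
    funext i k
    simp only [arvMul, Pi.zero_apply]
    split_ifs with hp
    swap
    · rfl
    rw [div_eq_zero_iff]
    left
    rw [← tsum_zero (α := ℂ) (β := Ω)]
    refine tsum_congr fun j => ?_
    by_contra hne
    simp only [cutR, cutL, mul_eq_zero, not_or, ite_eq_right_iff, Classical.not_imp,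
      Set.mem_compl_iff] at hne
    obtain ⟨⟨-, hj, hi, hAij⟩, -, hk, -, hBjk⟩ := hne
    have p1 : 0 < stochPow P n i j := by
      by_contra hc
      exact hAij (hA.1 _ _ hc)
    have p2 : 0 < stochPow P m j k := by
      by_contra hc
      exact hBjk (hB.1 _ _ hc)
    obtain ⟨γ, a0, a1, a2⟩ := (stochPow_pos_iff hP _ _ _).1 p1
    obtain ⟨δ, b0, b1, b2⟩ := (stochPow_pos_iff hP _ _ _).1 p2
    have hσ : ∀ t, (if n + t ≤ n then γ (n + t) else δ (n + t - n)) = δ t := by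
      intro t
      rcases Nat.eq_zero_or_pos t with rfl | ht
      · simp [a1, b0]
      · simp [ht.ne']
    have := h (n + m) (fun t => if t ≤ n then γ t else δ (t - n)) (by simpa [a0] using hi)
      (by rw [hσ, b1]; exact hk) ?_ n (by omega)
    · simp [a1] at this
      exact hj this
    · intro t ht
      rcases lt_or_ge t n with h1 | h1
      · simpa [h1.le, Nat.succ_le_of_lt h1] using a2 t h1
      · obtain ⟨s, rfl⟩ := Nat.exists_eq_add_of_le h1
        rw [hσ, add_assoc n s 1, hσ]
        exact b2 s (by omega)
end

section
/- For a stochastic matrix P over Ω and a state i ∈ Ω, the minimal projection p_i is reducing for Arv(P) if and only if there is no streamlined cycle through i in the directed graph of P, i.e., no cycle γ : {0,…,ℓ} → Ω with γ(0) = γ(ℓ) = i, ℓ ≥ 2, and γ(k) ≠ γ(k+1) for all k. -/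
theorem aux_nonneg {Ω : Type*} {P : Ω → Ω → ℝ} (hP : IsStochastic P) (n : ℕ) :
    ∀ a b, 0 ≤ stochPow P n a b := by
  induction n with
  | zero => intro a b; simp only [stochPow]; split_ifs <;> norm_num
  | succ n ih =>
    intro a b
    exact tsum_nonneg fun j => mul_nonneg (ih a j) (hP.1 j b)

theorem aux_summable_prod {Ω : Type*} {P : Ω → Ω → ℝ} (hP : IsStochastic P) (n : ℕ) (a : Ω)
    (h : Summable fun j => stochPow P n a j) :
    Summable fun x : Ω × Ω => stochPow P n a x.1 * P x.1 x.2 := by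
  have hnn : 0 ≤ fun x : Ω × Ω => stochPow P n a x.1 * P x.1 x.2 := fun x =>
    mul_nonneg (aux_nonneg hP n _ _) (hP.1 _ _)
  refine (summable_prod_of_nonneg hnn).2 ⟨?_, ?_⟩
  · intro j
    have h1 : Summable fun k => P j k := (hP.2 j).summable
    exact h1.mul_left (stochPow P n a j)
  · have h2 : (fun j => ∑' k, stochPow P n a j * P j k) = fun j => stochPow P n a j := by
      funext j
      rw [tsum_mul_left, (hP.2 j).tsum_eq, mul_one]
    exact h2 ▸ h

theorem aux_summable {Ω : Type*} {P : Ω → Ω → ℝ} (hP : IsStochastic P) (n : ℕ) (a : Ω) :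
    Summable fun j => stochPow P n a j := by
  induction n with
  | zero =>
    refine summable_of_ne_finset_zero (s := {a}) fun b hb => ?_
    have : a ≠ b := fun h => hb (by simp [h])
    simp [stochPow, this]
  | succ n ih =>
    exact (aux_summable_prod hP n a ih).prod_symm.prod

theorem aux_pos_succ {Ω : Type*} {P : Ω → Ω → ℝ} (hP : IsStochastic P) (n : ℕ) {a b c : Ω}
    (h1 : 0 < stochPow P n a b) (h2 : 0 < P b c) : 0 < stochPow P (n + 1) a c := by
  have hs : Summable fun j => stochPow P n a j * P j c :=
    (aux_summable_prod hP n a (aux_summable hP n a)).prod_symm.prod_factor c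
  exact hs.tsum_pos (fun j => mul_nonneg (aux_nonneg hP n _ _) (hP.1 _ _)) b (mul_pos h1 h2)

theorem aux_path_pos {Ω : Type*} {P : Ω → Ω → ℝ} (hP : IsStochastic P) (γ : ℕ → Ω) (l : ℕ)
    (h : ∀ k < l, 0 < P (γ k) (γ (k + 1))) (a k : ℕ) (hk : a + k ≤ l) :
    0 < stochPow P k (γ a) (γ (a + k)) := by
  induction k with
  | zero => simp [stochPow]
  | succ k ih => exact aux_pos_succ hP k (ih (by omega)) (h (a + k) (by omega))

theorem aux_reach {Ω : Type*} {P : Ω → Ω → ℝ} (hP : IsStochastic P) (n : ℕ) (a : Ω) :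
    ∀ b, 0 < stochPow P n a b →
      Relation.ReflTransGen (fun x y => 0 < P x y ∧ x ≠ y) a b := by
  induction n with
  | zero =>
    intro b h
    by_cases hab : a = b
    · subst hab; exact .refl
    · simp [stochPow, hab] at h
  | succ n ih =>
    intro b h
    have : ∃ j, stochPow P n a j * P j b ≠ 0 := by
      by_contra! hc
      have : stochPow P (n + 1) a b = 0 := by simp [stochPow, stochMul, hc]
      linarith
    obtain ⟨j, hj⟩ := this
    have h1 := lt_of_le_of_ne (aux_nonneg hP n a j) (left_ne_zero_of_mul hj).symm
    have h2 := lt_of_le_of_ne (hP.1 j b) (right_ne_zero_of_mul hj).symm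
    by_cases hjb : j = b
    · subst hjb; exact ih _ h1
    · exact (ih _ h1).tail ⟨h2, hjb⟩

theorem aux_path {Ω : Type*} {R : Ω → Ω → Prop} {a b : Ω} (h : Relation.ReflTransGen R a b) :
    ∃ (l : ℕ) (γ : ℕ → Ω), γ 0 = a ∧ γ l = b ∧ ∀ k < l, R (γ k) (γ (k + 1)) := by
  induction h using Relation.ReflTransGen.head_induction_on with
  | refl => exact ⟨0, fun _ => b, rfl, rfl, by simp⟩
  | head hac _ ih =>
    rename_i x y _
    obtain ⟨l, γ, h0, h1, h2⟩ := ih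
    refine ⟨l + 1, fun k => Nat.casesOn k x γ, rfl, h1, ?_⟩
    intro k hk
    cases k with
    | zero => simpa [h0] using hac
    | succ k => exact h2 k (by omega)

open Classical in
theorem aux_single_fiber {Ω : Type*} {P : Ω → Ω → ℝ} (n : ℕ) (a b : Ω)
    (h : 0 < stochPow P n a b) :
    InArvFiber P n (fun x y => if x = a ∧ y = b then 1 else 0) := by
  refine ⟨?_, 1, ?_⟩
  · intro x y hxy
    have : ¬ (x = a ∧ y = b) := by rintro ⟨rfl, rfl⟩; exact hxy h
    simp [this]
  · intro y s
    calc ∑ x ∈ s, ‖(if x = a ∧ y = b then 1 else 0 : ℂ)‖ ^ 2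
        ≤ ∑ x ∈ s, (if x = a then 1 else 0 : ℝ) := by
          refine Finset.sum_le_sum fun x _ => ?_
          by_cases hx : x = a <;> by_cases hy : y = b <;> simp [hx, hy]
      _ ≤ 1 := by
          rw [Finset.sum_ite_eq']
          split_ifs <;> norm_num

/-- the minimal projection `p_i` is reducing for `Arv(P)` if and only if there is
no streamlined cycle through `i` in the directed graph of `P`, i.e. no cycle
`γ : {0,…,ℓ} → Ω` with `γ 0 = γ ℓ = i`, `ℓ ≥ 2`, and `γ k ≠ γ (k+1)` for all `k`. -/
theorem isReducingSet_singleton_iff_no_streamlined_cycle {Ω : Type*} [Countable Ω]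
    {P : Ω → Ω → ℝ} (hP : IsStochastic P) (i : Ω) :
    IsReducingSet P {i} ↔
      ¬ ∃ (ℓ : ℕ) (γ : ℕ → Ω), 2 ≤ ℓ ∧ γ 0 = i ∧ γ ℓ = i ∧
        (∀ k < ℓ, 0 < P (γ k) (γ (k + 1))) ∧ ∀ k < ℓ, γ k ≠ γ (k + 1) := by
  classical
  constructor
  · rintro hred ⟨l, γ, hl, h0, h1, hpos, hne⟩
    obtain ⟨m, rfl⟩ : ∃ m, l = 1 + m := ⟨l - 1, by omega⟩
    have p1 := aux_path_pos hP γ (1 + m) hpos 0 1 (by omega)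
    have p2 := aux_path_pos hP γ (1 + m) hpos 1 m le_rfl
    have p3 := aux_path_pos hP γ (1 + m) hpos 0 (1 + m) (by omega)
    have hn : γ 1 ≠ i := by
      have := hne 0 (by omega)
      rw [h0] at this
      exact this.symm
    simp only [zero_add, h0, h1] at p1 p2 p3
    have := congrFun (congrFun (hred 1 m _ _ (aux_single_fiber 1 _ _ p1)
      (aux_single_fiber m _ _ p2)) i) i
    simp only [arvMul, if_pos p3] at this
    rw [tsum_eq_single (γ 1)] at this
    · have q1 := (Real.sqrt_pos.2 p1).ne'
      have q2 := (Real.sqrt_pos.2 p2).ne'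
      have q3 := (Real.sqrt_pos.2 p3).ne'
      simp [cutL, cutR, hn, q1, q2, q3] at this
    · intro j hj
      simp [cutL, cutR, hj]
  · intro hno n m A B hA hB
    funext a c
    simp only [arvMul]
    split_ifs
    swap
    · rfl
    have : ∀ j, ((Real.sqrt (stochPow P n a j) : ℂ) * cutR {i}ᶜ (cutL {i} A) a j) *
        ((Real.sqrt (stochPow P m j c) : ℂ) * cutR {i} (cutL {i}ᶜ B) j c) = 0 := by
      intro j
      by_cases hji : j = i
      · simp [cutR, hji]
      by_cases ha : a = i
      swap
      · simp [cutR, cutL, ha]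
      by_cases hc : c = i
      swap
      · simp [cutR, hc]
      subst ha
      subst hc
      by_cases h1 : 0 < stochPow P n c j
      swap
      · simp [cutR, cutL, hA.1 _ _ h1]
      by_cases h2 : 0 < stochPow P m j c
      swap
      · simp [cutR, cutL, hB.1 _ _ h2]
      exfalso
      apply hno
      have r1 := aux_reach hP n c j h1
      have r2 := aux_reach hP m j c h2
      rcases r1.cases_head with h | ⟨d, hd, hdj⟩
      · exact absurd h.symm hji
      obtain ⟨l, γ, g0, g1, g2⟩ := aux_path (hdj.trans r2)
      have hl : l ≠ 0 := by
        rintro rfl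
        exact hd.2 (g1.symm.trans g0)
      have key : ∀ k < l + 1, (fun x y => 0 < P x y ∧ x ≠ y)
          ((fun k => Nat.casesOn k c γ : ℕ → Ω) k)
          ((fun k => Nat.casesOn k c γ : ℕ → Ω) (k + 1)) := by
        intro k hk
        cases k with
        | zero => simpa [g0] using hd
        | succ k => exact g2 k (by omega)
      exact ⟨l + 1, fun k => Nat.casesOn k c γ, by omega, rfl, g1,
        fun k hk => (key k hk).1, fun k hk => (key k hk).2⟩
    simp only [this, tsum_zero, zero_div, Pi.zero_apply]
end
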